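/- Let M, N be positive integers, let φ : [0,∞) → (0,1] be non-increasing, and let L ∈ ℝ^{M×N} be φ-multiplicatively badly approximable, with each row's entries together with 1 linearly independent over ℚ. Let Q = (Q_1,…,Q_N) ∈ [1,∞)^N and let ε, T > 0 satisfy T^M/ε ≥ e^M (e the base of the natural logarithm). Then there exists a constant c₀ > 0 depending only on M and N such that #((Λ_L ∩ Z) \ C) ≤ c₀ (1+T)^{M+N−1} (log(T^M/ε))^{M−1} [ ε Q^N + (ε Q^N/φ(Q))^{(M+N−1)/(M+N)} ], where Q := (Q_1⋯Q_N)^{1/N}. -/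

import Mathlib

/-- Distance from a real number to the nearest integer. -/
noncomputable def distNearestInt (x : ℝ) : ℝ := |x - round x|

/-- The geometric mean `(Q₁ ⋯ Q_N)^(1/N)`. -/
noncomputable def geomMean (N : ℕ) (Q : Fin N → ℝ) : ℝ := (∏ j, Q j) ^ ((1 : ℝ) / (N : ℝ))

/-- `L` is `φ`-multiplicatively badly approximable. -/
def multBadlyApprox (M N : ℕ) (φ : ℝ → ℝ) (L : Matrix (Fin M) (Fin N) ℝ) : Prop :=
  ∀ q : Fin N → ℤ, q ≠ 0 →
    φ ((∏ j, max 1 |(q j : ℝ)|) ^ ((1 : ℝ) / (N : ℝ))) ≤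
      (∏ j, max 1 |(q j : ℝ)|) * ∏ i, distNearestInt (∑ j, L i j * (q j : ℝ))

/-- The entries of each row of `L`, together with `1`, are linearly independent over `ℚ`. -/
def rowUnitIndep (M N : ℕ) (L : Matrix (Fin M) (Fin N) ℝ) : Prop :=
  ∀ i, LinearIndependent ℚ (Fin.cons (1 : ℝ) (fun j => L i j) : Fin (N + 1) → ℝ)

/-- The lattice `Λ_L = A_L ℤ^(M+N)`, as a set of vectors in `ℝ^M × ℝ^N`. -/
def latticeL (M N : ℕ) (L : Matrix (Fin M) (Fin N) ℝ) : Set (Fin M ⊕ Fin N → ℝ) :=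
  {v | ∃ (p : Fin M → ℤ) (q : Fin N → ℤ),
    (∀ i, v (Sum.inl i) = (∑ j, L i j * (q j : ℝ)) + (p i : ℝ)) ∧
    (∀ j, v (Sum.inr j) = (q j : ℝ))}

/-- The set `Z = H × ∏ [-Q_j, Q_j]`. -/
def setZ (M N : ℕ) (ε T : ℝ) (Q : Fin N → ℝ) : Set (Fin M ⊕ Fin N → ℝ) :=
  {v | (∏ i, |v (Sum.inl i)|) < ε ∧ (∀ i, |v (Sum.inl i)| ≤ T) ∧ ∀ j, |v (Sum.inr j)| ≤ Q j}

/-- The set `C = {(x, y) : y = 0}`. -/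
def setC (M N : ℕ) : Set (Fin M ⊕ Fin N → ℝ) := {v | ∀ j : Fin N, v (Sum.inr j) = 0}

/-!
The region `H` is covered by `≪ log(T ^ M / ε) ^ (M - 1)` boxes `∏ [-T e^{-w_i}, T e^{-w_i}]` of
volume `≍ ε`, one for each `w : ℕ ^ M` of a fixed sum. Let `W` be the set of lattice points in one
such box times `∏ [-Q_j, Q_j]`.

If the differences of points of `W` span the whole space, then, with respect to the sublattice
generated by differences of maximal determinant, Cramer's rule bounds all coordinates, so
`#W ≪ vol ≍ ε ∏ Q_j`. Otherwise the differences lie in a hyperplane, and bad approximability makes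
the points `μ⁻¹`-separated once the box is rescaled to a unit cube, so that packing in dimension
`M + N - 1` gives `#W ≪ μ ^ (M + N - 1)`. When no `Q_j` is small one can take `μ ≍ B` with
`B ^ (M + N) = ε ∏ Q_j / φ(Q)`, which is the claim.

In general `B` is chosen with `B ^ M * ∏ min(B, Q_j) = ε ∏ Q_j / φ(Q)`. Fixing the coordinates `q_j`
with `Q_j ≤ B` costs a factor `≪ ∏_{Q_j ≤ B} Q_j`, and the dichotomy applied in the remaining
variables saves exactly this factor in both terms.
-/

section LatticePoints

variable {ι : Type*} [Fintype ι]

/-- The embedding `z ↦ G z` of `ℤ^ι` into `ℝ^ι`, whose range is the lattice `G ℤ^ι`. -/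
def latticeHom (G : Matrix ι ι ℝ) : (ι → ℤ) →+ (ι → ℝ) :=
  G.mulVecLin.toAddMonoidHom.comp ((Int.castAddHom ℝ).compLeft ι)

theorem latticeHom_apply (G : Matrix ι ι ℝ) (z : ι → ℤ) (i : ι) :
    latticeHom G z i = ∑ j, G i j * (z j : ℝ) := rfl

theorem exists_rows_det_ne_zero_or_exists_dotProduct_eq_zero {K : Type*} [Field K]
    [DecidableEq ι] (S : Set (ι → K)) :
    (∃ F : Matrix ι ι K, (∀ i, F i ∈ S) ∧ F.det ≠ 0) ∨
      ∃ a : ι → K, a ≠ 0 ∧ ∀ x ∈ S, a ⬝ᵥ x = 0 := by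
  by_cases hspan : Submodule.span K S = ⊤
  · left
    let b₀ := Module.Basis.ofSpan hspan.ge
    let b := b₀.reindex (b₀.indexEquiv (Pi.basisFun K ι))
    refine ⟨Matrix.of b, fun i ↦ ?_, ?_⟩
    · have hb : b i ∈ Set.range b₀ := by
        rw [← b₀.range_reindex]
        exact Set.mem_range_self i
      exact Module.Basis.ofSpan_subset hspan.ge hb
    · have hb : LinearIndependent K (Matrix.of b).row := b.linearIndependent
      rw [Matrix.linearIndependent_rows_iff_isUnit, Matrix.isUnit_iff_isUnit_det] at hb
      exact hb.ne_zero
  · right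
    obtain ⟨g, hg, hker⟩ := Submodule.exists_le_ker_of_lt_top _ (lt_top_iff_ne_top.2 hspan)
    obtain ⟨a, rfl⟩ := (dotProductEquiv K ι).surjective g
    refine ⟨a, fun ha ↦ hg (by rw [ha, map_zero]), fun x hx ↦ ?_⟩
    exact hker (Submodule.subset_span hx)

section FullRank

variable [DecidableEq ι]

theorem card_quotient_span_row {F : Matrix ι ι ℤ} (hF : F.det ≠ 0) :
    Nat.card ((ι → ℤ) ⧸ Submodule.span ℤ (Set.range F.row)) = F.det.natAbs := by
  have hli : LinearIndependent ℤ F.row := Matrix.linearIndependent_rows_of_det_ne_zero hF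
  rw [← Submodule.natAbs_det_basis_change (Pi.basisFun ℤ ι) _ (Module.Basis.span hli),
    Pi.basisFun_det]
  congr 2
  ext i j
  exact congrFun (congrArg Subtype.val (Module.Basis.span_apply hli i)) j

theorem det_updateRow_add_sum {R : Type*} [CommRing R] (F : Matrix ι ι R) (x k : ι → R) (i : ι) :
    (F.updateRow i (x + ∑ j, k j • F j)).det = (F.updateRow i x).det + k i * F.det := by
  rw [Matrix.det_updateRow_add, Matrix.det_updateRow_sum, smul_eq_mul]

theorem card_le_of_forall_abs_det_updateRow_le {F : Matrix ι ι ℤ} (hF : F.det ≠ 0)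
    {D : Finset (ι → ℤ)} (hmax : ∀ z ∈ D, ∀ i, |(F.updateRow i z).det| ≤ |F.det|) :
    D.card ≤ 5 ^ Fintype.card ι * F.det.natAbs := by
  classical
  set S := Submodule.span ℤ (Set.range F.row) with hS
  have hcard : Nat.card ((ι → ℤ) ⧸ S) = F.det.natAbs := card_quotient_span_row hF
  have : Finite ((ι → ℤ) ⧸ S) :=
    Nat.finite_of_card_ne_zero (by rwa [hcard, Int.natAbs_ne_zero])
  have := Fintype.ofFinite ((ι → ℤ) ⧸ S)
  rw [← hcard, Nat.card_eq_fintype_card]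
  refine Finset.card_le_mul_card_image_of_maps_to (f := S.mkQ) (fun z _ ↦ Finset.mem_univ _) _
    fun c _ ↦ ?_
  rcases Finset.eq_empty_or_nonempty {z ∈ D | S.mkQ z = c} with hempty | ⟨z₀, hz₀⟩
  · rw [hempty, Finset.card_empty]
    exact Nat.zero_le _
  obtain ⟨hz₀D, rfl⟩ := Finset.mem_filter.1 hz₀
  have hcoset : ∀ z ∈ ({z ∈ D | S.mkQ z = S.mkQ z₀} : Finset (ι → ℤ)),
      ∃ k ∈ Fintype.piFinset fun _ : ι ↦ Finset.Icc (-2 : ℤ) 2, z₀ + ∑ j, k j • F j = z := by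
    intro z hz
    obtain ⟨hzD, hzc⟩ := Finset.mem_filter.1 hz
    rw [Submodule.mkQ_apply, Submodule.mkQ_apply, Submodule.Quotient.eq, hS,
      Submodule.mem_span_range_iff_exists_fun] at hzc
    obtain ⟨k, hk⟩ := hzc
    have hz_eq : z₀ + ∑ j, k j • F j = z := by
      rw [add_comm, ← eq_sub_iff_add_eq]
      exact hk
    refine ⟨k, Fintype.mem_piFinset.2 fun i ↦ Finset.mem_Icc.2 (abs_le.1 ?_), hz_eq⟩
    have hdet := det_updateRow_add_sum F z₀ k i
    rw [hz_eq, ← sub_eq_iff_eq_add'] at hdet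
    refine le_of_mul_le_mul_right ?_ (abs_pos.2 hF)
    calc |k i| * |F.det| = |(F.updateRow i z).det - (F.updateRow i z₀).det| := by
          rw [hdet, abs_mul]
      _ ≤ |(F.updateRow i z).det| + |(F.updateRow i z₀).det| := abs_sub _ _
      _ ≤ 2 * |F.det| := by linarith [hmax z hzD i, hmax z₀ hz₀D i]
  calc _ ≤ (Fintype.piFinset fun _ : ι ↦ Finset.Icc (-2 : ℤ) 2).card :=
        Finset.card_le_card_of_surjOn _ hcoset
    _ = 5 ^ Fintype.card ι := by simp

theorem det_latticeHom_rows (G : Matrix ι ι ℝ) (F : Matrix ι ι ℤ) :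
    (Matrix.of fun i ↦ latticeHom G (F i)).det = F.det * G.det := by
  have hmul : (Matrix.of fun i ↦ latticeHom G (F i)) =
      (Int.castRingHom ℝ).mapMatrix F * G.transpose := by
    ext i j
    simp [latticeHom_apply, Matrix.mul_apply, mul_comm]
  rw [hmul, Matrix.det_mul, Matrix.det_transpose, ← RingHom.map_det, eq_intCast]

theorem card_mul_abs_det_le_of_exists_rows {G : Matrix ι ι ℝ} {D : Finset (ι → ℤ)}
    (hD : ∀ z ∈ D, ‖latticeHom G z‖ ≤ 1) {F₀ : Matrix ι ι ℤ} (hF₀ : ∀ i, F₀ i ∈ D)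
    (hdet₀ : F₀.det ≠ 0) :
    (D.card : ℝ) * |G.det| ≤ 5 ^ Fintype.card ι * (Fintype.card ι).factorial := by
  obtain ⟨F, hF, hmax⟩ : ∃ F : Matrix ι ι ℤ, (∀ i, F i ∈ D) ∧
      ∀ F' : Matrix ι ι ℤ, (∀ i, F' i ∈ D) → |F'.det| ≤ |F.det| := by
    obtain ⟨F, hF, hmax⟩ := Finset.exists_max_image (Fintype.piFinset fun _ : ι ↦ D)
      (fun F ↦ |(Matrix.of F).det|) ⟨F₀, Fintype.mem_piFinset.2 hF₀⟩
    exact ⟨Matrix.of F, Fintype.mem_piFinset.1 hF,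
      fun F' hF' ↦ hmax F' (Fintype.mem_piFinset.2 hF')⟩
  have hdet : F.det ≠ 0 := abs_pos.1 ((abs_pos.2 hdet₀).trans_le (hmax F₀ hF₀))
  have hcard : D.card ≤ 5 ^ Fintype.card ι * F.det.natAbs := by
    refine card_le_of_forall_abs_det_updateRow_le hdet fun z hz i ↦ hmax _ fun j ↦ ?_
    rcases eq_or_ne j i with rfl | hji
    · rwa [Matrix.updateRow_self]
    · rw [Matrix.updateRow_ne hji]
      exact hF j
  have hvol : (F.det.natAbs : ℝ) * |G.det| ≤ (Fintype.card ι).factorial := by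
    have hle := Matrix.det_le (A := Matrix.of fun i ↦ latticeHom G (F i))
      (abv := AbsoluteValue.abs) (x := 1)
      fun i j ↦ (norm_le_pi_norm (latticeHom G (F i)) j).trans (hD _ (hF i))
    rw [det_latticeHom_rows] at hle
    simpa [Nat.cast_natAbs, abs_mul] using hle
  calc (D.card : ℝ) * |G.det| ≤ (5 ^ Fintype.card ι * F.det.natAbs : ℕ) * |G.det| := by gcongr
    _ = 5 ^ Fintype.card ι * (F.det.natAbs * |G.det|) := by push_cast; ring
    _ ≤ 5 ^ Fintype.card ι * (Fintype.card ι).factorial := by gcongr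

end FullRank

theorem card_le_of_separated {α : Type*} {W : Finset α} {u : α → ι → ℝ} {μ : ℝ} (hμ : 1 ≤ μ)
    (hdiam : ∀ x ∈ W, ∀ y ∈ W, ‖u x - u y‖ ≤ 1)
    (hsep : ∀ x ∈ W, ∀ y ∈ W, x ≠ y → 1 ≤ μ * ‖u x - u y‖) :
    (W.card : ℝ) ≤ (5 * μ) ^ Fintype.card ι := by
  classical
  have hμ₀ : 0 < μ := by linarith
  rcases W.eq_empty_or_nonempty with rfl | ⟨x₀, hx₀⟩
  · simp only [Finset.card_empty, Nat.cast_zero]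
    positivity
  let cell : α → ι → ℤ := fun x i ↦ ⌊μ * (u x i - u x₀ i)⌋
  have hmaps : ∀ x ∈ W, cell x ∈ Fintype.piFinset fun _ ↦ Finset.Icc (-⌈μ⌉) ⌈μ⌉ := by
    intro x hx
    refine Fintype.mem_piFinset.2 fun i ↦ Finset.mem_Icc.2 ?_
    have hxi : |μ * (u x i - u x₀ i)| ≤ ⌈μ⌉ := by
      rw [abs_mul, abs_of_pos hμ₀]
      exact (mul_le_of_le_one_right hμ₀.le
        ((norm_le_pi_norm (u x - u x₀) i).trans (hdiam x hx x₀ hx₀))).trans (Int.le_ceil μ)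
    rw [abs_le] at hxi
    refine ⟨Int.le_floor.2 (by push_cast; exact hxi.1), ?_⟩
    exact_mod_cast (Int.floor_le _).trans hxi.2
  have hinj : Set.InjOn cell W := by
    intro x hx y hy hxy
    by_contra hne
    have hfloor : ∀ i, ‖(μ • (u x - u y)) i‖ < 1 := by
      intro i
      have h := Int.abs_sub_lt_one_of_floor_eq_floor (congrFun hxy i)
      rwa [← mul_sub, sub_sub_sub_cancel_right] at h
    refine (hsep x hx y hy hne).not_gt ?_
    rw [← Real.norm_of_nonneg hμ₀.le, ← norm_smul]
    exact (pi_norm_lt_iff one_pos).2 hfloor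
  have hcell : ((Finset.Icc (-⌈μ⌉) ⌈μ⌉).card : ℝ) ≤ 5 * μ := by
    have hceil : 0 ≤ ⌈μ⌉ := Int.ceil_nonneg hμ₀.le
    rw [Int.card_Icc, ← Int.cast_natCast, Int.toNat_of_nonneg (by omega)]
    push_cast
    linarith [Int.ceil_lt_add_one μ]
  calc (W.card : ℝ) ≤ ((Fintype.piFinset fun _ : ι ↦ Finset.Icc (-⌈μ⌉) ⌈μ⌉).card : ℝ) := by
        exact_mod_cast Finset.card_le_card_of_injOn cell hmaps hinj
    _ = ((Finset.Icc (-⌈μ⌉) ⌈μ⌉).card : ℝ) ^ Fintype.card ι := by simp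
    _ ≤ (5 * μ) ^ Fintype.card ι := by gcongr

theorem norm_le_card_mul_norm_restrict_of_dotProduct_eq_zero [DecidableEq ι] {a v : ι → ℝ} {k : ι}
    (hak : a k ≠ 0) (hmax : ∀ i, |a i| ≤ |a k|) (hav : a ⬝ᵥ v = 0) :
    ‖v‖ ≤ Fintype.card ι * ‖fun i : {i // i ≠ k} ↦ v i‖ := by
  set r := ‖fun i : {i // i ≠ k} ↦ v i‖ with hr
  have hother : ∀ i, i ≠ k → |v i| ≤ r := fun i hi ↦
    norm_le_pi_norm (fun i : {i // i ≠ k} ↦ v i) ⟨i, hi⟩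
  have hcard : (1 : ℝ) ≤ Fintype.card ι := by
    exact_mod_cast Fintype.card_pos_iff.2 ⟨k⟩
  have hr₀ : 0 ≤ r := norm_nonneg _
  refine (pi_norm_le_iff_of_nonneg (by positivity)).2 fun i ↦ ?_
  rcases eq_or_ne i k with rfl | hik
  · have hsolve : a i * v i = -∑ j ∈ Finset.univ.erase i, a j * v j :=
      eq_neg_of_add_eq_zero_left ((Finset.add_sum_erase _ _ (Finset.mem_univ i)).trans hav)
    refine le_of_mul_le_mul_left ?_ (abs_pos.2 hak)
    calc |a i| * |v i| = |∑ j ∈ Finset.univ.erase i, a j * v j| := by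
          rw [← abs_mul, hsolve, abs_neg]
      _ ≤ ∑ j ∈ Finset.univ.erase i, |a j * v j| := Finset.abs_sum_le_sum_abs _ _
      _ ≤ ∑ _j ∈ Finset.univ.erase i, |a i| * r := by
          refine Finset.sum_le_sum fun j hj ↦ ?_
          rw [abs_mul]
          exact mul_le_mul (hmax j) (hother j (Finset.ne_of_mem_erase hj)) (abs_nonneg _)
            (abs_nonneg _)
      _ ≤ ∑ _j, |a i| * r :=
          Finset.sum_le_sum_of_subset_of_nonneg (Finset.erase_subset _ _)
            fun _ _ _ ↦ by positivity
      _ = |a i| * (Fintype.card ι * r) := by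
          rw [Finset.sum_const, Finset.card_univ, nsmul_eq_mul]
          ring
  · exact (hother i hik).trans (le_mul_of_one_le_left hr₀ hcard)

theorem card_le_of_separated_of_dotProduct_eq_zero {α : Type*} {W : Finset α} {u : α → ι → ℝ}
    {μ : ℝ} (hμ : 1 ≤ μ) {a : ι → ℝ} (ha : a ≠ 0)
    (horth : ∀ x ∈ W, ∀ y ∈ W, a ⬝ᵥ (u x - u y) = 0)
    (hdiam : ∀ x ∈ W, ∀ y ∈ W, ‖u x - u y‖ ≤ 1)
    (hsep : ∀ x ∈ W, ∀ y ∈ W, x ≠ y → 1 ≤ μ * ‖u x - u y‖) :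
    (W.card : ℝ) ≤ (5 * (Fintype.card ι * μ)) ^ (Fintype.card ι - 1) := by
  classical
  obtain ⟨i₀, hi₀⟩ := Function.ne_iff.1 ha
  obtain ⟨k, -, hmax⟩ := Finset.exists_max_image Finset.univ (fun i ↦ |a i|)
    ⟨i₀, Finset.mem_univ i₀⟩
  replace hmax : ∀ i, |a i| ≤ |a k| := fun i ↦ hmax i (Finset.mem_univ i)
  have hak : a k ≠ 0 := abs_pos.1 ((abs_pos.2 hi₀).trans_le (hmax i₀))
  have hcard : (1 : ℝ) ≤ Fintype.card ι := by
    exact_mod_cast Fintype.card_pos_iff.2 ⟨k⟩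
  have hpack : (W.card : ℝ) ≤ (5 * (Fintype.card ι * μ)) ^ Fintype.card {i // i ≠ k} := by
    refine card_le_of_separated (u := fun x (i : {i // i ≠ k}) ↦ u x i)
      (one_le_mul_of_one_le_of_one_le hcard hμ) (fun x hx y hy ↦ ?_) fun x hx y hy hne ↦ ?_
    · refine (pi_norm_le_iff_of_nonneg zero_le_one).2 fun i ↦ ?_
      exact (norm_le_pi_norm (u x - u y) i).trans (hdiam x hx y hy)
    · rw [mul_comm (Fintype.card ι : ℝ), mul_assoc]
      refine (hsep x hx y hy hne).trans ?_
      gcongr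
      exact norm_le_card_mul_norm_restrict_of_dotProduct_eq_zero hak hmax (horth x hx y hy)
  rwa [Fintype.card_subtype_compl, Fintype.card_subtype_eq] at hpack

theorem card_le_of_norm_latticeHom_sub [DecidableEq ι] {G : Matrix ι ι ℝ} (hG : G.det ≠ 0)
    {W : Finset (ι → ℤ)} {μ : ℝ} (hμ : 1 ≤ μ)
    (hdiam : ∀ z ∈ W, ∀ z' ∈ W, ‖latticeHom G (z - z')‖ ≤ 1)
    (hsep : ∀ z ∈ W, ∀ z' ∈ W, z ≠ z' → 1 ≤ μ * ‖latticeHom G (z - z')‖) :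
    (W.card : ℝ) ≤ 5 ^ Fintype.card ι * (Fintype.card ι).factorial / |G.det| +
      (5 * (Fintype.card ι * μ)) ^ (Fintype.card ι - 1) := by
  classical
  have : 0 < μ := by linarith
  rcases W.eq_empty_or_nonempty with rfl | ⟨z₀, hz₀⟩
  · simp only [Finset.card_empty, Nat.cast_zero]
    positivity
  let D := W.image fun z ↦ z - z₀
  rcases exists_rows_det_ne_zero_or_exists_dotProduct_eq_zero (latticeHom G '' D) with
    ⟨E, hE, hdet⟩ | ⟨a, ha, horth⟩
  · choose F hF hFE using hE
    obtain rfl : (Matrix.of fun i ↦ latticeHom G (F i)) = E := funext hFE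
    replace hdet : ((Matrix.of F).det : ℝ) * G.det ≠ 0 := det_latticeHom_rows G (Matrix.of F) ▸ hdet
    have hcard : (D.card : ℝ) * |G.det| ≤ _ := card_mul_abs_det_le_of_exists_rows
      (Finset.forall_mem_image.2 fun z hz ↦ hdiam z hz z₀ hz₀) hF
      (Int.cast_ne_zero.1 (left_ne_zero_of_mul hdet))
    rw [Finset.card_image_of_injective _ sub_left_injective,
      ← le_div_iff₀ (abs_pos.2 hG)] at hcard
    exact hcard.trans (le_add_of_nonneg_right (by positivity))
  · have horth₀ : ∀ z ∈ W, a ⬝ᵥ (latticeHom G z - latticeHom G z₀) = 0 := fun z hz ↦ by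
      rw [← map_sub]
      exact horth _ ⟨_, Finset.mem_image_of_mem _ hz, rfl⟩
    simp only [map_sub] at hdiam hsep
    have hcard := card_le_of_separated_of_dotProduct_eq_zero (u := latticeHom G) hμ ha
      (fun z hz z' hz' ↦ by
        rw [← sub_sub_sub_cancel_right _ _ (latticeHom G z₀), dotProduct_sub, horth₀ z hz,
          horth₀ z' hz', sub_zero]) hdiam hsep
    exact hcard.trans (le_add_of_nonneg_left (by positivity))

theorem card_le_of_abs_latticeHom_sub_le [DecidableEq ι] {A : Matrix ι ι ℝ} (hA : A.det ≠ 0)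
    {s : ι → ℝ} (hs : ∀ a, 0 < s a) {W : Finset (ι → ℤ)} {μ : ℝ} (hμ : 1 ≤ μ)
    (hdiam : ∀ z ∈ W, ∀ z' ∈ W, ∀ a, |latticeHom A (z - z') a| ≤ s a)
    (hsep : ∀ z ∈ W, ∀ z' ∈ W, z ≠ z' → ∃ a, s a ≤ μ * |latticeHom A (z - z') a|) :
    (W.card : ℝ) ≤ 5 ^ Fintype.card ι * (Fintype.card ι).factorial * (∏ a, s a) / |A.det| +
      (5 * (Fintype.card ι * μ)) ^ (Fintype.card ι - 1) := by
  let G := Matrix.diagonal (fun a ↦ (s a)⁻¹) * A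
  have hG_apply : ∀ z a, |latticeHom G z a| = |latticeHom A z a| / s a := by
    intro z a
    have : latticeHom G z a = (s a)⁻¹ * latticeHom A z a := by
      simp only [latticeHom_apply, G, Matrix.diagonal_mul, Finset.mul_sum, mul_assoc]
    rw [this, abs_mul, abs_of_pos (inv_pos.2 (hs a)), inv_mul_eq_div]
  have hG_det : |G.det| = (∏ a, s a)⁻¹ * |A.det| := by
    rw [Matrix.det_mul, Matrix.det_diagonal, Finset.prod_inv_distrib, abs_mul,
      abs_of_pos (inv_pos.2 (Finset.prod_pos fun a _ ↦ hs a))]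
  have hprod : 0 < ∏ a, s a := Finset.prod_pos fun a _ ↦ hs a
  have hG : G.det ≠ 0 := abs_pos.1 (hG_det ▸ by positivity)
  have hcard := card_le_of_norm_latticeHom_sub hG hμ (W := W) ?_ ?_
  · rwa [hG_det, inv_mul_eq_div, div_div_eq_mul_div] at hcard
  · intro z hz z' hz'
    refine (pi_norm_le_iff_of_nonneg zero_le_one).2 fun a ↦ ?_
    rw [Real.norm_eq_abs, hG_apply, div_le_one (hs a)]
    exact hdiam z hz z' hz' a
  · intro z hz z' hz' hne
    obtain ⟨a, ha⟩ := hsep z hz z' hz' hne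
    calc 1 ≤ μ * |latticeHom G (z - z') a| := by
          rw [hG_apply, ← mul_div_assoc, one_le_div (hs a)]
          exact ha
      _ ≤ μ * ‖latticeHom G (z - z')‖ := by
          gcongr
          exact norm_le_pi_norm (latticeHom G (z - z')) a

end LatticePoints

section LogarithmicCover

variable {ι : Type*} [Fintype ι]

theorem exists_exp_le_and_le_exp {M : ℕ} (hM : M ≠ 0) {x : ℝ} (hx : Real.exp 1 ^ M ≤ x) :
    ∃ s : ℕ, Real.exp (s + M) ≤ x ∧ x ≤ Real.exp (s + M + 1) ∧ s + 1 ≤ Real.log x := by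
  have hx₀ : 0 < x := lt_of_lt_of_le (by positivity) hx
  have hlog : (M : ℝ) ≤ Real.log x := by rwa [Real.le_log_iff_exp_le hx₀, ← Real.exp_one_pow]
  have hlog₀ : 0 ≤ Real.log x := (Nat.cast_nonneg M).trans hlog
  obtain ⟨s, hs⟩ := Nat.exists_eq_add_of_le' (Nat.le_floor hlog)
  have hle := Nat.floor_le hlog₀
  have hlt := Nat.lt_floor_add_one (Real.log x)
  simp only [hs, Nat.cast_add] at hle hlt
  have hM₁ : (1 : ℝ) ≤ M := by exact_mod_cast Nat.one_le_iff_ne_zero.2 hM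
  exact ⟨s, (Real.le_log_iff_exp_le hx₀).1 hle, (Real.log_le_iff_le_exp hx₀).1 hlt.le,
    by linarith⟩

theorem card_piFinset_Icc_floor_le {Q : ι → ℝ} (hQ : ∀ j, 1 ≤ Q j) [DecidableEq ι] :
    ((Fintype.piFinset fun j ↦ Finset.Icc (-⌊Q j⌋) ⌊Q j⌋).card : ℝ) ≤
      3 ^ Fintype.card ι * ∏ j, Q j := by
  rw [Fintype.card_piFinset, Nat.cast_prod, ← Finset.card_univ, ← Finset.prod_const,
    ← Finset.prod_mul_distrib]
  refine Finset.prod_le_prod (fun j _ ↦ Nat.cast_nonneg _) fun j _ ↦ ?_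
  have hfloor : 0 ≤ ⌊Q j⌋ := Int.floor_nonneg.2 (zero_le_one.trans (hQ j))
  rw [Int.card_Icc, ← Int.cast_natCast, Int.toNat_of_nonneg (by linarith)]
  push_cast
  linarith [Int.floor_le (Q j), hQ j]

variable [DecidableEq ι]

theorem card_finsuppAntidiag_univ_le [Nonempty ι] (s : ℕ) :
    ((Finset.univ : Finset ι).finsuppAntidiag s).card ≤ (s + 1) ^ (Fintype.card ι - 1) := by
  obtain ⟨k, hk⟩ := Nat.exists_eq_succ_of_ne_zero (Fintype.card_ne_zero (α := ι))
  rw [Finset.card_finsuppAntidiag_nat_eq_choose, Finset.card_univ, hk, Nat.succ_add,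
    Nat.succ_sub_one, Nat.succ_sub_one, ← Nat.choose_symm_add, add_comm]
  exact Nat.choose_add_le_add_one_pow s k

theorem exists_mem_finsuppAntidiag_forall_le_mul_exp {x : ι → ℝ} {T : ℝ} (hx : ∀ i, 0 < x i)
    (hxT : ∀ i, x i ≤ T) {s : ℕ}
    (hprod : Real.exp (s + Fintype.card ι) * ∏ i, x i ≤ T ^ Fintype.card ι) :
    ∃ w ∈ (Finset.univ : Finset ι).finsuppAntidiag s, ∀ i, x i ≤ T * Real.exp (-w i) := by
  have hT : ∀ i, 0 < T / x i := fun i ↦ div_pos ((hx i).trans_le (hxT i)) (hx i)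
  let u : ι →₀ ℕ := Finsupp.equivFunOnFinite.symm fun i ↦ ⌊Real.log (T / x i)⌋₊
  have hu_le : ∀ i, (u i : ℝ) ≤ Real.log (T / x i) := fun i ↦
    Nat.floor_le (Real.log_nonneg ((one_le_div (hx i)).2 (hxT i)))
  have hu_lt : ∀ i, T ≤ Real.exp (u i + 1) * x i := fun i ↦
    (div_le_iff₀ (hx i)).1 ((Real.log_le_iff_le_exp (hT i)).1 (Nat.lt_floor_add_one _).le)
  have hsum : Real.exp (s + Fintype.card ι) ≤ Real.exp (∑ i, (u i + 1 : ℝ)) := by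
    refine le_of_mul_le_mul_right (hprod.trans ?_) (Finset.prod_pos fun i _ ↦ hx i)
    rw [Real.exp_sum, ← Finset.prod_mul_distrib, ← Finset.card_univ, ← Finset.prod_const]
    exact Finset.prod_le_prod (fun i _ ↦ ((hx i).trans_le (hxT i)).le) fun i _ ↦ hu_lt i
  have hs : s ≤ u.degree := by
    rw [Real.exp_le_exp, Finset.sum_add_distrib, Finset.sum_const, nsmul_one, Finset.card_univ,
      add_le_add_iff_right] at hsum
    rw [Finsupp.degree_eq_sum]
    exact_mod_cast hsum
  obtain ⟨w, hwu, hw⟩ := u.exists_le_degree_eq s hs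
  refine ⟨w, Finset.mem_finsuppAntidiag.2
    ⟨(Finsupp.degree_eq_sum w).symm.trans hw, Finset.subset_univ _⟩, fun i ↦ ?_⟩
  have hwi : (w i : ℝ) ≤ Real.log (T / x i) := le_trans (by exact_mod_cast hwu i) (hu_le i)
  rw [Real.le_log_iff_exp_le (hT i), le_div_iff₀' (hx i)] at hwi
  rwa [Real.exp_neg, ← div_eq_mul_inv, le_div_iff₀ (Real.exp_pos _)]

theorem prod_two_mul_exp_le {ε T : ℝ} (hε : 0 < ε) {s : ℕ}
    (hT : T ^ Fintype.card ι / ε ≤ Real.exp (s + Fintype.card ι + 1)) {w : ι →₀ ℕ}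
    (hw : w ∈ (Finset.univ : Finset ι).finsuppAntidiag s) :
    ∏ i, 2 * (T * Real.exp (-w i)) ≤
      2 ^ Fintype.card ι * Real.exp (Fintype.card ι + 1) * ε := by
  have hsum : ∑ i, (w i : ℝ) = s := by exact_mod_cast (Finset.mem_finsuppAntidiag.1 hw).1
  rw [div_le_iff₀ hε, add_assoc, Real.exp_add] at hT
  calc ∏ i, 2 * (T * Real.exp (-w i))
      = 2 ^ Fintype.card ι * (T ^ Fintype.card ι / Real.exp s) := by
        rw [Finset.prod_mul_distrib, Finset.prod_mul_distrib, ← Real.exp_sum,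
          Finset.sum_neg_distrib, hsum, Real.exp_neg, Finset.prod_const, Finset.prod_const,
          Finset.card_univ, div_eq_mul_inv]
    _ ≤ 2 ^ Fintype.card ι * (Real.exp (Fintype.card ι + 1) * ε) := by
        gcongr
        rw [div_le_iff₀ (Real.exp_pos _)]
        linarith
    _ = _ := by ring

end LogarithmicCover

section BadlyApproximable

variable {m n : Type*} [Fintype m] [Fintype n]

/-- The finite-height form of multiplicative bad approximability: the product in
`multBadlyApprox` is at least `δ` for the nonzero `q` in the box `∏ [-Q_j, Q_j]`. -/
def MultBadUpTo (L : Matrix m n ℝ) (Q : n → ℝ) (δ : ℝ) : Prop :=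
  ∀ q : n → ℤ, q ≠ 0 → (∀ j, |(q j : ℝ)| ≤ Q j) →
    δ ≤ (∏ j, max 1 |(q j : ℝ)|) * ∏ i, distNearestInt (∑ j, L i j * (q j : ℝ))

theorem distNearestInt_nonneg (x : ℝ) : 0 ≤ distNearestInt x := abs_nonneg _

theorem distNearestInt_le_abs_add (x : ℝ) (p : ℤ) : distNearestInt x ≤ |x + p| := by
  simpa [distNearestInt] using round_le x (-p)

theorem MultBadUpTo.submatrix {n' : Type*} [Fintype n'] {L : Matrix m n ℝ} {Q : n → ℝ} {δ : ℝ}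
    (h : MultBadUpTo L Q δ) (hQ : ∀ j, 0 ≤ Q j) {e : n' → n} (he : Function.Injective e) :
    MultBadUpTo (L.submatrix id e) (Q ∘ e) δ := by
  intro q hq hqQ
  let q' : n → ℤ := Function.extend e q fun _ ↦ 0
  have hq' : ∀ j, q' (e j) = q j := he.extend_apply q _
  have hq'₀ : ∀ j ∉ Set.range e, q' j = 0 := fun j hj ↦ Function.extend_apply' q _ j hj
  have hmax : ∏ j, max 1 |(q j : ℝ)| = ∏ j, max 1 |(q' j : ℝ)| :=
    Fintype.prod_of_injective e he _ _ (fun j hj ↦ by simp [hq'₀ j hj]) fun j ↦ by rw [hq']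
  have hsum : ∀ i, ∑ j, L.submatrix id e i j * (q j : ℝ) = ∑ j, L i j * (q' j : ℝ) := fun i ↦
    Fintype.sum_of_injective e he _ _ (fun j hj ↦ by simp [hq'₀ j hj]) fun j ↦ by
      rw [hq', Matrix.submatrix_apply, id]
  simp only [hmax, hsum]
  refine h q' (fun h₀ ↦ hq (funext fun j ↦ by rw [← hq', h₀, Pi.zero_apply, Pi.zero_apply]))
    fun j ↦ ?_
  by_cases hj : j ∈ Set.range e
  · obtain ⟨j', rfl⟩ := hj
    rw [hq']
    exact hqQ j'
  · simpa [hq'₀ j hj] using hQ j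

variable [DecidableEq m] [DecidableEq n]

/-- The unipotent block matrix `A_L`, with rows and columns indexed by `m ⊕ n`; the lattice `Λ_L` is
its image of the integer vectors. -/
def unipotentBlock (L : Matrix m n ℝ) : Matrix (m ⊕ n) (m ⊕ n) ℝ := Matrix.fromBlocks 1 L 0 1

theorem det_unipotentBlock (L : Matrix m n ℝ) : (unipotentBlock L).det = 1 := by
  rw [unipotentBlock, Matrix.det_fromBlocks_one₁₁, Matrix.zero_mul, sub_zero, Matrix.det_one]

theorem latticeHom_unipotentBlock_inl (L : Matrix m n ℝ) (z : m ⊕ n → ℤ) (i : m) :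
    latticeHom (unipotentBlock L) z (Sum.inl i) =
      ∑ j, L i j * (z (Sum.inr j) : ℝ) + z (Sum.inl i) := by
  simp [latticeHom_apply, unipotentBlock, Matrix.one_apply, add_comm]

theorem latticeHom_unipotentBlock_inr (L : Matrix m n ℝ) (z : m ⊕ n → ℤ) (j : n) :
    latticeHom (unipotentBlock L) z (Sum.inr j) = z (Sum.inr j) := by
  simp [latticeHom_apply, unipotentBlock, Matrix.one_apply]

theorem latticeHom_unipotentBlock_comp_map {n' : Type*} [Fintype n'] [DecidableEq n']
    (L : Matrix m n ℝ) {e : n' → n} (he : Function.Injective e) {z : m ⊕ n → ℤ}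
    (hz : ∀ j ∉ Set.range e, z (Sum.inr j) = 0) :
    latticeHom (unipotentBlock (L.submatrix id e)) (z ∘ Sum.map id e) =
      latticeHom (unipotentBlock L) z ∘ Sum.map id e := by
  ext (i | j)
  · simp only [Function.comp_apply, Sum.map_inl, Sum.map_inr, latticeHom_unipotentBlock_inl, id,
      Matrix.submatrix_apply]
    congr 1
    exact Fintype.sum_of_injective e he _ _ (fun j hj ↦ by simp [hz j hj]) fun j ↦ rfl
  · simp only [Function.comp_apply, Sum.map_inr, latticeHom_unipotentBlock_inr]

/-- The pairwise differences of the integer vectors in `W` are mapped by `A_L` into the box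
`∏ [-s_i, s_i] × ∏ [-2 Q_j, 2 Q_j]`. Only differences are constrained because the counting argument
never refers to a base point. -/
structure IsCell (L : Matrix m n ℝ) (s : m → ℝ) (Q : n → ℝ) (W : Finset (m ⊕ n → ℤ)) : Prop where
  abs_inl_le : ∀ z ∈ W, ∀ z' ∈ W, ∀ i,
    |latticeHom (unipotentBlock L) (z - z') (Sum.inl i)| ≤ s i
  abs_inr_le : ∀ z ∈ W, ∀ z' ∈ W, ∀ j, |((z - z') (Sum.inr j) : ℝ)| ≤ 2 * Q j

namespace MultBadUpTo

variable {L : Matrix m n ℝ} {Q : n → ℝ} {δ : ℝ}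

theorem le_prod_mul_prod_abs_latticeHom (h : MultBadUpTo L Q δ) {z : m ⊕ n → ℤ}
    (hz : z ∘ Sum.inr ≠ 0) {R : n → ℝ} (hR : ∀ j, 1 ≤ R j) (hRQ : ∀ j, R j ≤ Q j)
    (hzR : ∀ j, |(z (Sum.inr j) : ℝ)| ≤ R j) :
    δ ≤ (∏ j, R j) * ∏ i, |latticeHom (unipotentBlock L) z (Sum.inl i)| := by
  refine (h _ hz fun j ↦ (hzR j).trans (hRQ j)).trans ?_
  have hdist : ∀ i, distNearestInt (∑ j, L i j * (z (Sum.inr j) : ℝ)) ≤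
      |latticeHom (unipotentBlock L) z (Sum.inl i)| := fun i ↦ by
    rw [latticeHom_unipotentBlock_inl]
    exact distNearestInt_le_abs_add _ _
  refine mul_le_mul (Finset.prod_le_prod (fun j _ ↦ by positivity) fun j _ ↦ max_le (hR j) (hzR j))
    (Finset.prod_le_prod (fun i _ ↦ distNearestInt_nonneg _) fun i _ ↦ hdist i)
    (Finset.prod_nonneg fun i _ ↦ distNearestInt_nonneg _)
    (Finset.prod_nonneg fun j _ ↦ zero_le_one.trans (hR j))

theorem exists_le_abs_latticeHom_or_exists_lt_abs (h : MultBadUpTo L Q δ) {R : n → ℝ}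
    (hR : ∀ j, 1 ≤ R j) (hRQ : ∀ j, R j ≤ Q j) {Y : m → ℝ} (hY : ∀ i, Y i ≤ 1)
    (hYR : (∏ j, R j) * ∏ i, Y i < δ) {z : m ⊕ n → ℤ} (hz : z ≠ 0) :
    (∃ i, Y i ≤ |latticeHom (unipotentBlock L) z (Sum.inl i)|) ∨
      ∃ j, R j < |(z (Sum.inr j) : ℝ)| := by
  by_contra! hsmall
  obtain ⟨hzY, hzR⟩ := hsmall
  by_cases hq : z ∘ Sum.inr = 0
  · refine hz (funext ?_)
    rintro (i | j)
    · have hi := (hzY i).trans_le (hY i)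
      have hq' : ∀ j, z (Sum.inr j) = 0 := congrFun hq
      simp only [latticeHom_unipotentBlock_inl, hq', Int.cast_zero, mul_zero,
        Finset.sum_const_zero, zero_add] at hi
      exact Int.abs_lt_one_iff.1 (by exact_mod_cast hi)
    · exact congrFun hq j
  · refine hYR.not_ge ((h.le_prod_mul_prod_abs_latticeHom hq hR hRQ hzR).trans ?_)
    refine mul_le_mul_of_nonneg_left ?_ (Finset.prod_nonneg fun j _ ↦ zero_le_one.trans (hR j))
    exact Finset.prod_le_prod (fun i _ ↦ abs_nonneg _) fun i _ ↦ (hzY i).le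

theorem card_le (h : MultBadUpTo L Q δ) {B μ : ℝ} (hB : 1 ≤ B) (hBQ : ∀ j, B ≤ Q j)
    (hBμ : 2 * B ≤ μ) {s : m → ℝ} (hs : ∀ i, 0 < s i) (hsμ : ∀ i, s i ≤ μ)
    (hvol : (∏ i, s i) * ∏ j, Q j < δ * (μ ^ Fintype.card m * B ^ Fintype.card n))
    {W : Finset (m ⊕ n → ℤ)} (hW : IsCell L s Q W) :
    (W.card : ℝ) ≤
      5 ^ Fintype.card (m ⊕ n) * (Fintype.card (m ⊕ n)).factorial *
          ((∏ i, s i) * ∏ j, 2 * Q j) +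
        (5 * (Fintype.card (m ⊕ n) * μ)) ^ (Fintype.card (m ⊕ n) - 1) := by
  have hB₀ : 0 < B := by linarith
  have hμ : 0 < μ := by linarith
  have hQ : ∀ j, 0 < Q j := fun j ↦ hB₀.trans_le (hBQ j)
  have hcard := card_le_of_abs_latticeHom_sub_le (A := unipotentBlock L) (W := W)
    (s := Sum.elim s fun j ↦ 2 * Q j) (μ := μ) (by simp [det_unipotentBlock]) ?_
    (by linarith) ?_ fun z _ z' _ hne ↦ ?_
  · simpa only [det_unipotentBlock, abs_one, div_one, Fintype.prod_sum_type, Sum.elim_inl,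
      Sum.elim_inr] using hcard
  · rintro (i | j)
    · exact hs i
    · exact mul_pos two_pos (hQ j)
  · rintro z hz z' hz' (i | j)
    · exact hW.abs_inl_le z hz z' hz' i
    · rw [latticeHom_unipotentBlock_inr]
      exact hW.abs_inr_le z hz z' hz' j
  · have hYR : (∏ j, Q j / B) * ∏ i, s i / μ < δ := by
      rw [Finset.prod_div_distrib, Finset.prod_div_distrib, Finset.prod_const, Finset.prod_const,
        Finset.card_univ, Finset.card_univ, div_mul_div_comm, div_lt_iff₀ (by positivity)]
      linarith
    rcases h.exists_le_abs_latticeHom_or_exists_lt_abs (fun j ↦ (one_le_div hB₀).2 (hBQ j))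
      (fun j ↦ div_le_self (hQ j).le hB) (fun i ↦ (div_le_one hμ).2 (hsμ i)) hYR
      (sub_ne_zero.2 hne) with ⟨i, hi⟩ | ⟨j, hj⟩
    · exact ⟨Sum.inl i, (div_le_iff₀' hμ).1 hi⟩
    · refine ⟨Sum.inr j, ?_⟩
      rw [latticeHom_unipotentBlock_inr, Sum.elim_inr]
      rw [div_lt_iff₀ hB₀] at hj
      nlinarith [abs_nonneg ((z - z') (Sum.inr j) : ℝ)]

theorem card_le_of_eq_off_range {n' : Type*} [Fintype n']
    (h : MultBadUpTo L Q δ) (hQ : ∀ j, 0 ≤ Q j) {e : n' → n} (he : Function.Injective e)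
    {B μ : ℝ} (hB : 1 ≤ B) (hBQ : ∀ j, B ≤ Q (e j)) (hBμ : 2 * B ≤ μ) {s : m → ℝ}
    (hs : ∀ i, 0 < s i) (hsμ : ∀ i, s i ≤ μ)
    (hvol : (∏ i, s i) * ∏ j, Q (e j) < δ * (μ ^ Fintype.card m * B ^ Fintype.card n'))
    {W : Finset (m ⊕ n → ℤ)} (hW : IsCell L s Q W)
    (hWe : ∀ z ∈ W, ∀ z' ∈ W, ∀ j ∉ Set.range e, (z - z') (Sum.inr j) = 0) :
    (W.card : ℝ) ≤
      5 ^ Fintype.card (m ⊕ n') * (Fintype.card (m ⊕ n')).factorial *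
          ((∏ i, s i) * ∏ j, 2 * Q (e j)) +
        (5 * (Fintype.card (m ⊕ n') * μ)) ^ (Fintype.card (m ⊕ n') - 1) := by
  classical
  let restrict : (m ⊕ n → ℤ) → m ⊕ n' → ℤ := fun z ↦ z ∘ Sum.map id e
  have hlattice : ∀ z ∈ W, ∀ z' ∈ W,
      latticeHom (unipotentBlock (L.submatrix id e)) (restrict z - restrict z') =
        latticeHom (unipotentBlock L) (z - z') ∘ Sum.map id e := fun z hz z' hz' ↦
    latticeHom_unipotentBlock_comp_map L he (hWe z hz z' hz')
  have hinj : Set.InjOn restrict W := by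
    intro z hz z' hz' heq
    refine funext ?_
    rintro (i | j)
    · exact congrFun heq (Sum.inl i)
    · by_cases hj : j ∈ Set.range e
      · obtain ⟨j', rfl⟩ := hj
        exact congrFun heq (Sum.inr j')
      · exact sub_eq_zero.1 (hWe z hz z' hz' j hj)
  rw [← Finset.card_image_of_injOn hinj]
  refine (h.submatrix hQ he).card_le hB hBQ hBμ hs hsμ hvol ⟨?_, ?_⟩ <;>
    simp only [Finset.forall_mem_image]
  · intro z hz z' hz' i
    rw [hlattice z hz z' hz']
    exact hW.abs_inl_le z hz z' hz' i
  · exact fun z hz z' hz' j ↦ hW.abs_inr_le z hz z' hz' (e j)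

end MultBadUpTo

end BadlyApproximable

section Cell

theorem div_le_rpow_of_le_pow {A B : ℝ} (hA : 0 < A) (hB : 0 < B) {D : ℕ} (hD : D ≠ 0)
    (hAB : A ≤ B ^ D) : A / B ≤ A ^ (((D : ℝ) - 1) / D) := by
  have hroot : A ^ (1 / D : ℝ) ≤ B := by
    rw [one_div]
    exact (Real.rpow_inv_le_iff_of_pos hA.le hB.le (by positivity)).2
      (by rwa [Real.rpow_natCast])
  calc A / B ≤ A / A ^ (1 / D : ℝ) := by gcongr
    _ = A ^ (((D : ℝ) - 1) / D) := by
        rw [sub_div, div_self (by exact_mod_cast hD), Real.rpow_sub hA, Real.rpow_one]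

theorem mul_add_mul_mul_le {a b t x y : ℝ} (ha : 0 ≤ a) (hb : 0 ≤ b) (ht : 1 ≤ t) (hx : 0 ≤ x)
    (hy : 0 ≤ y) : a * x + b * t * y ≤ (a + b) * t * (x + y) := by
  have hax : a * x ≤ a * x * t := le_mul_of_one_le_right (mul_nonneg ha hx) ht
  have hcross : 0 ≤ t * (a * y + b * x) := by positivity
  linarith

variable {m n : Type*} [Fintype m] [Fintype n]

theorem prod_min_eq_prod_mul_pow (B : ℝ) (Q : n → ℝ) :
    ∏ j, min B (Q j) =
      (∏ j : {j // Q j ≤ B}, Q j) * B ^ Fintype.card {j // ¬ Q j ≤ B} := by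
  rw [← Fintype.prod_subtype_mul_prod_subtype (fun j ↦ Q j ≤ B), ← Finset.card_univ,
    ← Finset.prod_const]
  congr 1
  · exact Finset.prod_congr rfl fun j _ ↦ min_eq_right j.2
  · exact Finset.prod_congr rfl fun j _ ↦ min_eq_left (le_of_not_ge j.2)

theorem exists_pow_mul_prod_min_eq {A : ℝ} (hA : 1 ≤ A) {Q : n → ℝ} (hQ : ∀ j, 1 ≤ Q j) {M : ℕ}
    (hM : M ≠ 0) : ∃ B, 1 ≤ B ∧ B ^ M * ∏ j, min B (Q j) = A := by
  let f : ℝ → ℝ := fun B ↦ B ^ M * ∏ j, min B (Q j)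
  have hcont : Continuous f := by fun_prop
  have hlower : f 1 ≤ A := by simpa [f, min_eq_left (hQ _)] using hA
  have hprod : 1 ≤ ∏ j, min A (Q j) := by
    simpa only [Finset.prod_const_one] using Finset.prod_le_prod (f := fun _ : n ↦ (1 : ℝ))
      (fun _ _ ↦ zero_le_one) fun j (_ : j ∈ Finset.univ) ↦ le_min hA (hQ j)
  have hupper : A ≤ f A :=
    (le_self_pow₀ hA hM).trans (le_mul_of_one_le_right (by positivity) hprod)
  obtain ⟨B, hB, hfB⟩ := intermediate_value_Icc hA hcont.continuousOn ⟨hlower, hupper⟩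
  exact ⟨B, hB.1, hfB⟩

theorem prod_mul_pow_le_rpow [Nonempty m] {B : ℝ} (hB : 0 < B) {Q : n → ℝ} (hQ : ∀ j, 0 < Q j) :
    (∏ j : {j // Q j ≤ B}, Q j) * B ^ (Fintype.card (m ⊕ {j // ¬ Q j ≤ B}) - 1) ≤
      (B ^ Fintype.card m * ∏ j, min B (Q j)) ^
        (((Fintype.card (m ⊕ n) : ℝ) - 1) / Fintype.card (m ⊕ n)) := by
  have hle : B ^ Fintype.card m * ∏ j, min B (Q j) ≤ B ^ Fintype.card (m ⊕ n) := by
    rw [Fintype.card_sum, pow_add, ← Finset.card_univ (α := n)]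
    gcongr
    rw [← Finset.prod_const]
    exact Finset.prod_le_prod (fun j _ ↦ (lt_min hB (hQ j)).le) fun j _ ↦ min_le_left _ _
  refine le_of_eq_of_le ?_ (div_le_rpow_of_le_pow
    (mul_pos (pow_pos hB _) (Finset.prod_pos fun j _ ↦ lt_min hB (hQ j))) hB
    Fintype.card_ne_zero hle)
  obtain ⟨M, hM⟩ := Nat.exists_eq_succ_of_ne_zero (Fintype.card_ne_zero (α := m))
  rw [eq_div_iff hB.ne', prod_min_eq_prod_mul_pow, Fintype.card_sum, hM, Nat.succ_add,
    Nat.succ_sub_one, pow_add, pow_succ]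
  ring

theorem prod_short_mul_prod_two_mul_long_le (B : ℝ) {Q : n → ℝ} (hQ : ∀ j, 0 ≤ Q j) :
    (∏ j : {j // Q j ≤ B}, Q j) * ∏ j : {j // ¬ Q j ≤ B}, 2 * Q j ≤
      2 ^ Fintype.card n * ∏ j, Q j := by
  have hprodQ : 0 ≤ ∏ j, Q j := Finset.prod_nonneg fun j _ ↦ hQ j
  rw [Finset.prod_mul_distrib, mul_left_comm,
    Fintype.prod_subtype_mul_prod_subtype (fun j ↦ Q j ≤ B), Finset.prod_const, Finset.card_univ]
  gcongr
  · exact one_le_two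
  · exact Fintype.card_subtype_le _

theorem mul_prod_long_eq {B ε δ : ℝ} {Q : n → ℝ} (hδ : δ ≠ 0) (hQ : ∀ j, Q j ≠ 0) {M : ℕ}
    (hB : B ^ M * ∏ j, min B (Q j) = ε * (∏ j, Q j) / δ) :
    ε * ∏ j : {j // ¬ Q j ≤ B}, Q j = δ * (B ^ M * B ^ Fintype.card {j // ¬ Q j ≤ B}) := by
  rw [prod_min_eq_prod_mul_pow, eq_div_iff hδ,
    ← Fintype.prod_subtype_mul_prod_subtype (fun j ↦ Q j ≤ B)] at hB
  have hshort : ∏ j : {j // Q j ≤ B}, Q j ≠ 0 := Finset.prod_ne_zero_iff.2 fun j _ ↦ hQ j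
  refine mul_left_cancel₀ hshort ?_
  linarith

variable [DecidableEq m] [DecidableEq n]

theorem MultBadUpTo.card_le_of_eq_on_short {L : Matrix m n ℝ} {Q : n → ℝ} {δ : ℝ}
    (h : MultBadUpTo L Q δ) (hδ : 0 < δ) (hQ : ∀ j, 0 < Q j) [Nonempty m] {B ε T C : ℝ}
    (hB : 1 ≤ B) (hT : 0 ≤ T) (hC : 1 ≤ C)
    (hBvol : B ^ Fintype.card m * ∏ j, min B (Q j) = ε * (∏ j, Q j) / δ) {s : m → ℝ}
    (hs : ∀ i, 0 < s i) (hsT : ∀ i, s i ≤ 2 * T) (hsε : ∏ i, s i ≤ C * ε)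
    {W : Finset (m ⊕ n → ℤ)} (hW : IsCell L s Q W)
    (hWB : ∀ z ∈ W, ∀ z' ∈ W, ∀ j, Q j ≤ B → (z - z') (Sum.inr j) = 0) :
    (W.card : ℝ) ≤
      5 ^ Fintype.card (m ⊕ n) * (Fintype.card (m ⊕ n)).factorial *
          (C * ε * ∏ j : {j // ¬ Q j ≤ B}, 2 * Q j) +
        (5 * (Fintype.card (m ⊕ n) * (2 * C * (1 + T) * B))) ^
          (Fintype.card (m ⊕ {j // ¬ Q j ≤ B}) - 1) := by
  have hprodQ : 0 < ∏ j : {j // ¬ Q j ≤ B}, Q j := Finset.prod_pos fun j _ ↦ hQ j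
  have hcard : Fintype.card (m ⊕ {j // ¬ Q j ≤ B}) ≤ Fintype.card (m ⊕ n) := by
    simpa only [Fintype.card_sum, add_le_add_iff_left] using Fintype.card_subtype_le _
  have hlam : 1 + T ≤ C * (1 + T) := le_mul_of_one_le_left (by positivity) hC
  have hlam_pow : C < (2 * C * (1 + T)) ^ Fintype.card m :=
    lt_of_lt_of_le (by nlinarith) (le_self_pow₀ (by nlinarith) Fintype.card_ne_zero)
  have hvol : (∏ i, s i) * ∏ j : {j // ¬ Q j ≤ B}, Q j <
      δ * ((2 * C * (1 + T) * B) ^ Fintype.card m * B ^ Fintype.card {j // ¬ Q j ≤ B}) := by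
    calc _ ≤ C * ε * ∏ j : {j // ¬ Q j ≤ B}, Q j := by gcongr
      _ = C * (δ * (B ^ Fintype.card m * B ^ Fintype.card {j // ¬ Q j ≤ B})) := by
          rw [mul_assoc, mul_prod_long_eq hδ.ne' (fun j ↦ (hQ j).ne') hBvol]
      _ < (2 * C * (1 + T)) ^ Fintype.card m *
          (δ * (B ^ Fintype.card m * B ^ Fintype.card {j // ¬ Q j ≤ B})) := by gcongr
      _ = _ := by rw [mul_pow _ B]; ring
  refine (h.card_le_of_eq_off_range (fun j ↦ (hQ j).le) Subtype.val_injective hB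
    (fun j ↦ le_of_not_ge j.2) ?_ hs (fun i ↦ (hsT i).trans ?_) hvol hW
    fun z hz z' hz' j hj ↦ hWB z hz z' hz' j (by simpa using hj)).trans ?_
  · gcongr
    linarith
  · exact (by linarith : 2 * T ≤ 2 * C * (1 + T)).trans
      (le_mul_of_one_le_right (by positivity) hB)
  · have hprod : 0 ≤ ∏ j : {j // ¬ Q j ≤ B}, 2 * Q j :=
      Finset.prod_nonneg fun j _ ↦ mul_nonneg zero_le_two (hQ j).le
    gcongr
    · exact mul_nonneg (Finset.prod_nonneg fun i _ ↦ (hs i).le) hprod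
    · norm_num

theorem MultBadUpTo.card_mul_prod_short_le {L : Matrix m n ℝ} {Q : n → ℝ} {δ : ℝ}
    (h : MultBadUpTo L Q δ) (hδ : 0 < δ) (hQ : ∀ j, 0 < Q j) [Nonempty m] {B ε T C : ℝ}
    (hB : 1 ≤ B) (hT : 0 ≤ T) (hC : 1 ≤ C)
    (hBvol : B ^ Fintype.card m * ∏ j, min B (Q j) = ε * (∏ j, Q j) / δ) {s : m → ℝ}
    (hs : ∀ i, 0 < s i) (hsT : ∀ i, s i ≤ 2 * T) (hsε : ∏ i, s i ≤ C * ε)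
    {W : Finset (m ⊕ n → ℤ)} (hW : IsCell L s Q W)
    (hWB : ∀ z ∈ W, ∀ z' ∈ W, ∀ j, Q j ≤ B → (z - z') (Sum.inr j) = 0) :
    W.card * (∏ j : {j // Q j ≤ B}, Q j) ≤
      5 ^ Fintype.card (m ⊕ n) * (Fintype.card (m ⊕ n)).factorial * C * 2 ^ Fintype.card n *
          (ε * ∏ j, Q j) +
        (10 * Fintype.card (m ⊕ n) * C * (1 + T)) ^ (Fintype.card (m ⊕ n) - 1) *
          (ε * (∏ j, Q j) / δ) ^
            (((Fintype.card (m ⊕ n) : ℝ) - 1) / Fintype.card (m ⊕ n)) := by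
  set D := Fintype.card (m ⊕ n) with hD
  set d := Fintype.card (m ⊕ {j // ¬ Q j ≤ B}) with hd
  set P := ∏ j : {j // Q j ≤ B}, Q j
  have hP₀ : 0 < P := Finset.prod_pos fun j _ ↦ hQ j
  have hdD : d ≤ D := by
    simpa only [hd, hD, Fintype.card_sum, add_le_add_iff_left] using Fintype.card_subtype_le _
  have hlam : 1 ≤ 10 * D * C * (1 + T) := by
    have hD₁ : (1 : ℝ) ≤ D := by exact_mod_cast Fintype.card_pos
    have := one_le_mul_of_one_le_of_one_le (one_le_mul_of_one_le_of_one_le hD₁ hC)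
      (le_add_of_nonneg_right hT)
    linarith
  have herr := prod_mul_pow_le_rpow (m := m) (one_pos.trans_le hB) hQ
  rw [hBvol] at herr
  have hε : 0 ≤ ε := nonneg_of_mul_nonneg_right ((Finset.prod_pos fun i _ ↦ hs i).le.trans hsε)
    (by positivity)
  have hmain := prod_short_mul_prod_two_mul_long_le B fun j ↦ (hQ j).le
  calc W.card * P ≤ (5 ^ D * D.factorial * (C * ε * ∏ j : {j // ¬ Q j ≤ B}, 2 * Q j) +
        (5 * (D * (2 * C * (1 + T) * B))) ^ (d - 1)) * P := by
        gcongr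
        exact h.card_le_of_eq_on_short hδ hQ hB hT hC hBvol hs hsT hsε hW hWB
    _ = 5 ^ D * D.factorial * C * ε * (P * ∏ j : {j // ¬ Q j ≤ B}, 2 * Q j) +
        (10 * D * C * (1 + T)) ^ (d - 1) * (P * B ^ (d - 1)) := by
        rw [show 5 * (D * (2 * C * (1 + T) * B)) = 10 * D * C * (1 + T) * B by ring, mul_pow _ B]
        ring
    _ ≤ 5 ^ D * D.factorial * C * ε * (2 ^ Fintype.card n * ∏ j, Q j) +
        (10 * D * C * (1 + T)) ^ (D - 1) * (ε * (∏ j, Q j) / δ) ^ (((D : ℝ) - 1) / D) := by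
        gcongr
    _ = _ := by ring

end Cell

section Counting

/-- The constant depending only on `M` and `N` in the bound for the number of lattice points. -/
noncomputable def countingConst (M N : ℕ) : ℝ :=
  3 ^ N * (5 ^ (M + N) * (M + N).factorial * (2 ^ M * Real.exp (M + 1)) * 2 ^ N +
    (10 * (M + N : ℕ) * (2 ^ M * Real.exp (M + 1))) ^ (M + N - 1))

theorem countingConst_pos (M N : ℕ) : 0 < countingConst M N := by
  rw [countingConst]
  positivity

variable {m n : Type*} [Fintype m] [Fintype n] [DecidableEq m]

theorem card_le_succ_pow_mul_of_fibers [Nonempty m] {Q : n → ℝ} (hQ : ∀ j, 1 ≤ Q j)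
    {p : n → Prop} [DecidablePred p] {S : Finset (m ⊕ n → ℤ)}
    (hSQ : ∀ z ∈ S, ∀ j, |(z (Sum.inr j) : ℝ)| ≤ Q j) {s : ℕ} {w : (m ⊕ n → ℤ) → m →₀ ℕ}
    (hw : ∀ z ∈ S, w z ∈ (Finset.univ : Finset m).finsuppAntidiag s) {K : ℝ} (hK₀ : 0 ≤ K)
    (hK : ∀ v ∈ (Finset.univ : Finset m).finsuppAntidiag s, ∀ c : {j // p j} → ℤ, ∀ W ⊆ S,
      (∀ z ∈ W, w z = v) → (∀ z ∈ W, ∀ j : {j // p j}, z (Sum.inr j) = c j) →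
      3 ^ Fintype.card n * (W.card * ∏ j : {j // p j}, Q j) ≤ K) :
    (S.card : ℝ) ≤ (s + 1) ^ (Fintype.card m - 1) * K := by
  classical
  let P := ∏ j : {j // p j}, Q j
  have hP : 0 < P := Finset.prod_pos fun j _ ↦ one_pos.trans_le (hQ j)
  let weights := (Finset.univ : Finset m).finsuppAntidiag s
  let box := Fintype.piFinset fun j : {j // p j} ↦ Finset.Icc (-⌊Q j⌋) ⌊Q j⌋
  let label : (m ⊕ n → ℤ) → (m →₀ ℕ) × ({j // p j} → ℤ) := fun z ↦ (w z, fun j ↦ z (Sum.inr j))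
  have hmaps : (S : Set (m ⊕ n → ℤ)).MapsTo label ↑(weights ×ˢ box) := by
    intro z hz
    refine Finset.mem_product.2 ⟨hw z hz, Fintype.mem_piFinset.2 fun j ↦ ?_⟩
    obtain ⟨hlower, hupper⟩ := abs_le.1 (hSQ z hz j)
    exact Finset.mem_Icc.2
      ⟨neg_le.1 (Int.le_floor.2 (by push_cast; linarith)), Int.le_floor.2 hupper⟩
  have hbox : (box.card : ℝ) ≤ 3 ^ Fintype.card n * P := by
    refine (card_piFinset_Icc_floor_le fun j : {j // p j} ↦ hQ j).trans ?_
    gcongr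
    · norm_num
    · exact Fintype.card_subtype_le _
  have hweights : (weights.card : ℝ) ≤ (s + 1) ^ (Fintype.card m - 1) := by
    exact_mod_cast card_finsuppAntidiag_univ_le s
  have hfibers : 3 ^ Fintype.card n * P * S.card ≤ (weights ×ˢ box).card * K := by
    rw [Finset.card_eq_sum_card_fiberwise hmaps, Nat.cast_sum, Finset.mul_sum, ← nsmul_eq_mul]
    refine Finset.sum_le_card_nsmul _ _ _ fun b hb ↦ ?_
    rw [mul_assoc, mul_comm P]
    refine hK b.1 (Finset.mem_product.1 hb).1 b.2 _ (Finset.filter_subset _ _)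
      (fun z hz ↦ ?_) fun z hz j ↦ ?_
    · exact congrArg Prod.fst (Finset.mem_filter.1 hz).2
    · exact congrFun (congrArg Prod.snd (Finset.mem_filter.1 hz).2) j
  refine le_of_mul_le_mul_left ?_ (show 0 < 3 ^ Fintype.card n * P by positivity)
  calc 3 ^ Fintype.card n * P * S.card ≤ weights.card * box.card * K := by
        rwa [Finset.card_product, Nat.cast_mul] at hfibers
    _ ≤ (s + 1) ^ (Fintype.card m - 1) * (3 ^ Fintype.card n * P) * K := by gcongr
    _ = 3 ^ Fintype.card n * P * ((s + 1) ^ (Fintype.card m - 1) * K) := by ring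

variable [DecidableEq n]

/-- The integer vectors `z` with `A_L z ∈ Z \ C`; they parametrize the lattice points
to be counted. -/
def hyperbolicPoints (L : Matrix m n ℝ) (Q : n → ℝ) (ε T : ℝ) : Set (m ⊕ n → ℤ) :=
  {z | ∏ i, |latticeHom (unipotentBlock L) z (Sum.inl i)| < ε ∧
    (∀ i, |latticeHom (unipotentBlock L) z (Sum.inl i)| ≤ T) ∧
    (∀ j, |(z (Sum.inr j) : ℝ)| ≤ Q j) ∧ z ∘ Sum.inr ≠ 0}

theorem finite_hyperbolicPoints (L : Matrix m n ℝ) (Q : n → ℝ) (ε T : ℝ) :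
    (hyperbolicPoints L Q ε T).Finite := by
  let b : m ⊕ n → ℤ := Sum.elim (fun i ↦ ⌊T + ∑ j, |L i j| * Q j⌋) fun j ↦ ⌊Q j⌋
  have habs : ∀ z ∈ hyperbolicPoints L Q ε T, ∀ a, |z a| ≤ b a := by
    rintro z ⟨-, hzT, hzQ, -⟩ (i | j)
    · refine Int.le_floor.2 ?_
      have hsum : |∑ j, L i j * (z (Sum.inr j) : ℝ)| ≤ ∑ j, |L i j| * Q j := by
        refine (Finset.abs_sum_le_sum_abs _ _).trans (Finset.sum_le_sum fun j _ ↦ ?_)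
        rw [abs_mul]
        exact mul_le_mul_of_nonneg_left (hzQ j) (abs_nonneg _)
      have hz := (abs_sub (latticeHom (unipotentBlock L) z (Sum.inl i)) _).trans
        (add_le_add (hzT i) hsum)
      rwa [latticeHom_unipotentBlock_inl, add_sub_cancel_left, ← Int.cast_abs] at hz
    · exact Int.le_floor.2 (by simpa only [Int.cast_abs] using hzQ j)
  exact (Set.finite_Icc (-b) b).subset fun z hz ↦
    ⟨fun a ↦ (abs_le.1 (habs z hz a)).1, fun a ↦ (abs_le.1 (habs z hz a)).2⟩

namespace MultBadUpTo

variable {L : Matrix m n ℝ} {Q : n → ℝ} {δ ε T : ℝ}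

theorem lt_mul_prod_of_mem_hyperbolicPoints (h : MultBadUpTo L Q δ) (hQ : ∀ j, 1 ≤ Q j)
    {z : m ⊕ n → ℤ} (hz : z ∈ hyperbolicPoints L Q ε T) : δ < ε * ∏ j, Q j := by
  obtain ⟨hzε, -, hzQ, hz₀⟩ := hz
  refine (h.le_prod_mul_prod_abs_latticeHom hz₀ hQ (fun j ↦ le_rfl) hzQ).trans_lt ?_
  rw [mul_comm]
  exact mul_lt_mul_of_pos_right hzε (Finset.prod_pos fun j _ ↦ one_pos.trans_le (hQ j))

theorem abs_latticeHom_pos_of_mem_hyperbolicPoints (h : MultBadUpTo L Q δ) (hδ : 0 < δ)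
    (hQ : ∀ j, 1 ≤ Q j) {z : m ⊕ n → ℤ} (hz : z ∈ hyperbolicPoints L Q ε T) (i : m) :
    0 < |latticeHom (unipotentBlock L) z (Sum.inl i)| := by
  obtain ⟨-, -, hzQ, hz₀⟩ := hz
  have hpos := hδ.trans_le (h.le_prod_mul_prod_abs_latticeHom hz₀ hQ (fun j ↦ le_rfl) hzQ)
  exact (abs_nonneg _).lt_of_ne'
    (Finset.prod_ne_zero_iff.1 (right_ne_zero_of_mul hpos.ne') i (Finset.mem_univ i))

theorem exists_mem_finsuppAntidiag_of_mem_hyperbolicPoints (h : MultBadUpTo L Q δ) (hδ : 0 < δ)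
    (hQ : ∀ j, 1 ≤ Q j) (hε : 0 < ε) {s : ℕ}
    (hs : Real.exp (s + Fintype.card m) ≤ T ^ Fintype.card m / ε) {z : m ⊕ n → ℤ}
    (hz : z ∈ hyperbolicPoints L Q ε T) :
    ∃ w ∈ (Finset.univ : Finset m).finsuppAntidiag s,
      ∀ i, |latticeHom (unipotentBlock L) z (Sum.inl i)| ≤ T * Real.exp (-w i) := by
  refine exists_mem_finsuppAntidiag_forall_le_mul_exp
    (h.abs_latticeHom_pos_of_mem_hyperbolicPoints hδ hQ hz) hz.2.1 ?_
  rw [le_div_iff₀ hε] at hs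
  refine le_trans ?_ hs
  gcongr
  exact hz.1.le

theorem card_mul_prod_short_le_of_abs_le_mul_exp (h : MultBadUpTo L Q δ) (hδ : 0 < δ)
    (hQ : ∀ j, 1 ≤ Q j) [Nonempty m] (hε : 0 < ε) (hT : 0 < T) {B : ℝ} (hB : 1 ≤ B)
    (hBvol : B ^ Fintype.card m * ∏ j, min B (Q j) = ε * (∏ j, Q j) / δ) {s : ℕ}
    (hs : T ^ Fintype.card m / ε ≤ Real.exp (s + Fintype.card m + 1)) {w : m →₀ ℕ}
    (hw : w ∈ (Finset.univ : Finset m).finsuppAntidiag s) {W : Finset (m ⊕ n → ℤ)}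
    (hWw : ∀ z ∈ W, ∀ i, |latticeHom (unipotentBlock L) z (Sum.inl i)| ≤ T * Real.exp (-w i))
    (hWQ : ∀ z ∈ W, ∀ j, |(z (Sum.inr j) : ℝ)| ≤ Q j) {c : {j // Q j ≤ B} → ℤ}
    (hWc : ∀ z ∈ W, ∀ j : {j // Q j ≤ B}, z (Sum.inr j) = c j) :
    3 ^ Fintype.card n * (W.card * ∏ j : {j // Q j ≤ B}, Q j) ≤
      countingConst (Fintype.card m) (Fintype.card n) *
        (1 + T) ^ (Fintype.card (m ⊕ n) - 1) * (ε * (∏ j, Q j) + (ε * (∏ j, Q j) / δ) ^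
          (((Fintype.card (m ⊕ n) : ℝ) - 1) / Fintype.card (m ⊕ n))) := by
  have hQ₀ : ∀ j, 0 < Q j := fun j ↦ one_pos.trans_le (hQ j)
  have hC : 1 ≤ 2 ^ Fintype.card m * Real.exp (Fintype.card m + 1) :=
    one_le_mul_of_one_le_of_one_le (one_le_pow₀ one_le_two) (Real.one_le_exp (by positivity))
  have hsT : ∀ i, 2 * (T * Real.exp (-w i)) ≤ 2 * T := fun i ↦
    mul_le_mul_of_nonneg_left (mul_le_of_le_one_right hT.le (Real.exp_le_one_iff.2 (by simp)))
      zero_le_two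
  have hcell : IsCell L (fun i ↦ 2 * (T * Real.exp (-w i))) Q W := by
    refine ⟨fun z hz z' hz' i ↦ ?_, fun z hz z' hz' j ↦ ?_⟩
    · rw [map_sub, Pi.sub_apply]
      exact (abs_sub _ _).trans (by linarith [hWw z hz i, hWw z' hz' i])
    · rw [Pi.sub_apply, Int.cast_sub]
      exact (abs_sub _ _).trans (by linarith [hWQ z hz j, hWQ z' hz' j])
  have hcard := h.card_mul_prod_short_le hδ hQ₀ hB hT.le hC hBvol (fun i ↦ by positivity) hsT
    (prod_two_mul_exp_le hε hs hw) hcell fun z hz z' hz' j hj ↦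
      sub_eq_zero.2 ((hWc z hz ⟨j, hj⟩).trans (hWc z' hz' ⟨j, hj⟩).symm)
  have hprod : 0 < ∏ j, Q j := Finset.prod_pos fun j _ ↦ hQ₀ j
  have hT₁ : 1 ≤ (1 + T) ^ (Fintype.card (m ⊕ n) - 1) := one_le_pow₀ (by linarith)
  rw [mul_pow _ (1 + T)] at hcard
  rw [countingConst, ← Fintype.card_sum, mul_assoc (3 ^ _), mul_assoc (3 ^ _)]
  exact mul_le_mul_of_nonneg_left (hcard.trans (mul_add_mul_mul_le (by positivity) (by positivity)
    hT₁ (by positivity) (by positivity))) (by positivity)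

theorem card_le_countingConst_mul (h : MultBadUpTo L Q δ) (hδ : 0 < δ) (hQ : ∀ j, 1 ≤ Q j)
    [Nonempty m] (hε : 0 < ε) (hT : 0 < T)
    (hTε : Real.exp 1 ^ Fintype.card m ≤ T ^ Fintype.card m / ε) {S : Finset (m ⊕ n → ℤ)}
    (hS : ↑S ⊆ hyperbolicPoints L Q ε T) :
    (S.card : ℝ) ≤
      countingConst (Fintype.card m) (Fintype.card n) *
        (1 + T) ^ (Fintype.card (m ⊕ n) - 1) *
        Real.log (T ^ Fintype.card m / ε) ^ (Fintype.card m - 1) *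
        (ε * (∏ j, Q j) + (ε * (∏ j, Q j) / δ) ^
          (((Fintype.card (m ⊕ n) : ℝ) - 1) / Fintype.card (m ⊕ n))) := by
  set K := countingConst (Fintype.card m) (Fintype.card n) *
    (1 + T) ^ (Fintype.card (m ⊕ n) - 1) * (ε * (∏ j, Q j) + (ε * (∏ j, Q j) / δ) ^
      (((Fintype.card (m ⊕ n) : ℝ) - 1) / Fintype.card (m ⊕ n))) with hK
  have hprod : 0 < ∏ j, Q j := Finset.prod_pos fun j _ ↦ one_pos.trans_le (hQ j)
  have hK₀ : 0 ≤ K := mul_nonneg (mul_nonneg (countingConst_pos _ _).le (by positivity))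
    (by positivity)
  obtain ⟨s, hs_le, hs_ge, hs_log⟩ := exists_exp_le_and_le_exp Fintype.card_ne_zero hTε
  suffices hS_card : S.card ≤ (s + 1) ^ (Fintype.card m - 1) * K by
    rw [mul_right_comm _ (Real.log _ ^ _), ← hK, mul_comm K]
    exact hS_card.trans (by gcongr)
  rcases S.eq_empty_or_nonempty with rfl | ⟨z₀, hz₀⟩
  · simpa only [Finset.card_empty, Nat.cast_zero] using mul_nonneg (by positivity) hK₀
  obtain ⟨B, hB, hBvol⟩ := exists_pow_mul_prod_min_eq
    ((one_le_div hδ).2 (h.lt_mul_prod_of_mem_hyperbolicPoints hQ (hS hz₀)).le) hQ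
    (Fintype.card_ne_zero (α := m))
  have hdyadic : ∀ z ∈ S, ∃ w ∈ (Finset.univ : Finset m).finsuppAntidiag s,
      ∀ i, |latticeHom (unipotentBlock L) z (Sum.inl i)| ≤ T * Real.exp (-w i) := fun z hz ↦
    h.exists_mem_finsuppAntidiag_of_mem_hyperbolicPoints hδ hQ hε hs_le (hS hz)
  choose! w hw_mem hw_le using hdyadic
  have hSQ : ∀ z ∈ S, ∀ j, |(z (Sum.inr j) : ℝ)| ≤ Q j := fun z hz ↦ (hS hz).2.2.1
  refine card_le_succ_pow_mul_of_fibers (p := fun j ↦ Q j ≤ B) hQ hSQ hw_mem hK₀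
    fun v hv c W hWS hWv hWc ↦ ?_
  exact h.card_mul_prod_short_le_of_abs_le_mul_exp hδ hQ hε hT hB hBvol hs_ge hv
    (fun z hz ↦ hWv z hz ▸ hw_le z (hWS hz)) (fun z hz ↦ hSQ z (hWS hz)) hWc

end MultBadUpTo

end Counting

section Specialization

variable {M N : ℕ}

theorem geomMean_pow (hN : N ≠ 0) {Q : Fin N → ℝ} (hQ : ∀ j, 0 ≤ Q j) :
    geomMean N Q ^ N = ∏ j, Q j := by
  rw [geomMean, one_div, Real.rpow_inv_natCast_pow (Finset.prod_nonneg fun j _ ↦ hQ j) hN]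

theorem multBadlyApprox.multBadUpTo {φ : ℝ → ℝ} {L : Matrix (Fin M) (Fin N) ℝ}
    (h : multBadlyApprox M N φ L) (hφ : AntitoneOn φ (Set.Ici 0)) {Q : Fin N → ℝ}
    (hQ : ∀ j, 1 ≤ Q j) : MultBadUpTo L Q (φ (geomMean N Q)) := by
  intro q hq hqQ
  have hprod : 0 ≤ ∏ j, max 1 |(q j : ℝ)| := by positivity
  have hle : ∏ j, max 1 |(q j : ℝ)| ≤ ∏ j, Q j :=
    Finset.prod_le_prod (fun j _ ↦ by positivity) fun j _ ↦ max_le (hQ j) (hqQ j)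
  refine (hφ ?_ ?_ ?_).trans (h q hq)
  · exact Real.rpow_nonneg hprod _
  · exact Real.rpow_nonneg (hprod.trans hle) _
  · exact Real.rpow_le_rpow hprod hle (by positivity)

theorem latticeL_inter_setZ_diff_setC (L : Matrix (Fin M) (Fin N) ℝ) (Q : Fin N → ℝ) (ε T : ℝ) :
    (latticeL M N L ∩ setZ M N ε T Q) \ setC M N =
      latticeHom (unipotentBlock L) '' hyperbolicPoints L Q ε T := by
  ext v
  constructor
  · rintro ⟨⟨⟨p, q, hvp, hvq⟩, hvε, hvT, hvQ⟩, hvC⟩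
    have hv : latticeHom (unipotentBlock L) (Sum.elim p q) = v := by
      ext (i | j)
      · exact (latticeHom_unipotentBlock_inl L _ i).trans (hvp i).symm
      · exact (latticeHom_unipotentBlock_inr L _ j).trans (hvq j).symm
    refine ⟨Sum.elim p q, ⟨hv ▸ hvε, hv ▸ hvT, fun j ↦ hvq j ▸ hvQ j, fun hq ↦ hvC fun j ↦ ?_⟩, hv⟩
    exact (hvq j).trans (by exact_mod_cast congrFun hq j)
  · rintro ⟨z, ⟨hzε, hzT, hzQ, hz₀⟩, rfl⟩
    refine ⟨⟨⟨z ∘ Sum.inl, z ∘ Sum.inr, latticeHom_unipotentBlock_inl L z,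
      latticeHom_unipotentBlock_inr L z⟩, hzε, hzT, fun j ↦ ?_⟩, fun hzC ↦ hz₀ (funext fun j ↦ ?_)⟩
    · rw [latticeHom_unipotentBlock_inr]
      exact hzQ j
    · exact_mod_cast (latticeHom_unipotentBlock_inr L z j).symm.trans (hzC j)

end Specialization

theorem stmt1 (M N : ℕ) (hM : 0 < M) (hN : 0 < N) :
    ∃ c₀ : ℝ, 0 < c₀ ∧
      ∀ φ : ℝ → ℝ, AntitoneOn φ (Set.Ici 0) → (∀ x : ℝ, 0 ≤ x → φ x ∈ Set.Ioc (0 : ℝ) 1) →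
      ∀ L : Matrix (Fin M) (Fin N) ℝ, rowUnitIndep M N L → multBadlyApprox M N φ L →
      ∀ Q : Fin N → ℝ, (∀ j, 1 ≤ Q j) →
      ∀ ε T : ℝ, 0 < ε → 0 < T → Real.exp 1 ^ M ≤ T ^ M / ε →
        (Set.ncard ((latticeL M N L ∩ setZ M N ε T Q) \ setC M N) : ℝ) ≤
          c₀ * (1 + T) ^ (M + N - 1) * Real.log (T ^ M / ε) ^ (M - 1) *
            (ε * geomMean N Q ^ N +
              (ε * geomMean N Q ^ N / φ (geomMean N Q)) ^
                (((M : ℝ) + (N : ℝ) - 1) / ((M : ℝ) + (N : ℝ)))) := by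
  refine ⟨countingConst M N, countingConst_pos M N,
    fun φ hφ hφ_mem L _ hL Q hQ ε T hε hT hTε ↦ ?_⟩
  have : Nonempty (Fin M) := Fin.pos_iff_nonempty.1 hM
  have hQ₀ : ∀ j, 0 ≤ Q j := fun j ↦ zero_le_one.trans (hQ j)
  have hδ : 0 < φ (geomMean N Q) :=
    (hφ_mem _ (Real.rpow_nonneg (Finset.prod_nonneg fun j _ ↦ hQ₀ j) _)).1
  have hfin := finite_hyperbolicPoints L Q ε T
  have hcard := (hL.multBadUpTo hφ hQ).card_le_countingConst_mul hδ hQ hε hT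
    (by rwa [Fintype.card_fin]) hfin.coe_toFinset.subset
  rw [latticeL_inter_setZ_diff_setC, geomMean_pow hN.ne' hQ₀]
  refine (Nat.cast_le.2 (Set.ncard_image_le hfin)).trans ?_
  simpa only [Set.ncard_eq_toFinset_card _ hfin, Fintype.card_sum, Fintype.card_fin,
    Nat.cast_add] using hcard
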